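/- arXiv:2401.11460 — 2 statements merged into one kernel-verified Lean document; each statement's English description precedes it below -/
import Mathlib

section
/- For every smooth compactly supported function f : ℝ → ℝ, the convolution u = p ∗ f is infinitely differentiable and satisfies the identity u(x) − u''(x) = f(x) for all x ∈ ℝ; that is, p is the fundamental solution of the operator (1 − ∂_x²) on ℝ. -/
open MeasureTheory

/-!
Differentiating under the convolution puts all derivatives on `f`: `u` is smooth and
`u'' = p ∗ f''`. Hence `u x - u'' x = ∫ p(t) (g(t) - g''(t)) dt` with `g(t) = f(x - t)`, and it
remains to see that this pairing is `g 0` for every `C²` compactly supported `g`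
(`integral_kernel_mul_sub`). On each half-line the integrand is an exact derivative,
`eᵗ (g - g'') = (eᵗ (g - g'))'` for `t ≤ 0` and `e⁻ᵗ (g - g'') = (-e⁻ᵗ (g + g'))'` for `t > 0`,
so the two halves contribute `(g 0 - g' 0) / 2` and `(g 0 + g' 0) / 2`.
-/

theorem continuous_kernel : Continuous fun t : ℝ => (1 / 2 : ℝ) * Real.exp (-|t|) := by
  fun_prop

/-- The distributional identity `(1 - ∂²) p = δ₀`, tested against `g`. -/
theorem integral_kernel_mul_sub (g : ℝ → ℝ) (hg : ContDiff ℝ 2 g) (hs : HasCompactSupport g) :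
    ∫ t : ℝ, (1 / 2 : ℝ) * Real.exp (-|t|) * (g t - deriv (deriv g) t) = g 0 := by
  have hg' : ContDiff ℝ 1 (deriv g) := ContDiff.deriv' (n := 1) (by rwa [one_add_one_eq_two])
  have hs' : HasCompactSupport (deriv g) := hs.deriv
  have d0 : ∀ t, HasDerivAt g (deriv g t) t := fun t =>
    (hg.differentiable (by norm_num) t).hasDerivAt
  have d1 : ∀ t, HasDerivAt (deriv g) (deriv (deriv g) t) t := fun t =>
    (hg'.differentiable (by norm_num) t).hasDerivAt
  have c2 : Continuous (deriv (deriv g)) := hg'.continuous_deriv (by norm_num)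
  have hint : Integrable
      (fun t : ℝ => (1 / 2 : ℝ) * Real.exp (-|t|) * (g t - deriv (deriv g) t)) := by
    refine Continuous.integrable_of_hasCompactSupport
      (continuous_kernel.mul (hg.continuous.sub c2)) ?_
    exact HasCompactSupport.mul_left (hs.sub hs'.deriv)
  have hleft : ∫ t in Set.Iic (0 : ℝ), (1 / 2 : ℝ) * Real.exp (-|t|) * (g t - deriv (deriv g) t)
      = (g 0 - deriv g 0) / 2 := by
    have hF : ContDiff ℝ 1 (fun t => (1 / 2 : ℝ) * Real.exp t * (g t - deriv g t)) := by
      have := hg.of_le (m := 1) (by norm_num)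
      fun_prop
    have hFs : HasCompactSupport (fun t => (1 / 2 : ℝ) * Real.exp t * (g t - deriv g t)) :=
      HasCompactSupport.mul_left (hs.sub hs')
    have key := hFs.integral_Iic_deriv_eq hF 0
    rw [Real.exp_zero] at key
    trans (1 / 2 : ℝ) * 1 * (g 0 - deriv g 0)
    · rw [← key]
      refine setIntegral_congr_fun measurableSet_Iic fun t ht => ?_
      have hd := ((Real.hasDerivAt_exp t).const_mul (1 / 2 : ℝ)).mul ((d0 t).sub (d1 t))
      refine Eq.trans ?_ hd.deriv.symm
      simp only [abs_of_nonpos (Set.mem_Iic.1 ht), neg_neg, Pi.sub_apply]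
      ring
    · ring
  have hright : ∫ t in Set.Ioi (0 : ℝ), (1 / 2 : ℝ) * Real.exp (-|t|) * (g t - deriv (deriv g) t)
      = (g 0 + deriv g 0) / 2 := by
    have hF : ContDiff ℝ 1 (fun t => (-1 / 2 : ℝ) * Real.exp (-t) * (g t + deriv g t)) := by
      have := hg.of_le (m := 1) (by norm_num)
      fun_prop
    have hFs : HasCompactSupport (fun t => (-1 / 2 : ℝ) * Real.exp (-t) * (g t + deriv g t)) :=
      HasCompactSupport.mul_left (hs.add hs')
    have key := hFs.integral_Ioi_deriv_eq hF 0
    rw [neg_zero, Real.exp_zero] at key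
    trans -((-1 / 2 : ℝ) * 1 * (g 0 + deriv g 0))
    · rw [← key]
      refine setIntegral_congr_fun measurableSet_Ioi fun t ht => ?_
      have hd := (((hasDerivAt_neg t).exp).const_mul (-1 / 2 : ℝ)).mul ((d0 t).add (d1 t))
      refine Eq.trans ?_ hd.deriv.symm
      simp only [abs_of_pos (Set.mem_Ioi.1 ht), Pi.add_apply]
      ring
    · ring
  rw [← intervalIntegral.integral_Iic_add_Ioi hint.integrableOn hint.integrableOn, hleft, hright]
  ring

/-- For every smooth compactly supported `f : ℝ → ℝ`, the convolution `u = p ∗ f` with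
`p x = (1/2) * exp (-|x|)` is infinitely differentiable and satisfies `u - u'' = f`
pointwise; i.e. `p` is the fundamental solution of `1 - ∂ₓ²` on `ℝ`. -/
theorem stmt2 (f : ℝ → ℝ) (hf : ContDiff ℝ (⊤ : ℕ∞) f) (hfsupp : HasCompactSupport f)
    (u : ℝ → ℝ) (hu : u = fun x => ∫ z : ℝ, (1 / 2 : ℝ) * Real.exp (-|x - z|) * f z) :
    ContDiff ℝ (⊤ : ℕ∞) u ∧ ∀ x : ℝ, u x - deriv (deriv u) x = f x := by
  set p : ℝ → ℝ := fun t => (1 / 2 : ℝ) * Real.exp (-|t|) with hp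
  have hpl : LocallyIntegrable p := continuous_kernel.locallyIntegrable
  set L := ContinuousLinearMap.mul ℝ ℝ
  have hup : u = convolution p f L volume := by
    rw [hu]
    funext x
    rw [convolution_def, ← integral_sub_left_eq_self _ volume x]
    simp [hp, L]
  have hf2 : ContDiff ℝ 2 f := contDiff_infty.1 hf 2
  have hf' : ContDiff ℝ 1 (deriv f) := ContDiff.deriv' (n := 1) (by rwa [one_add_one_eq_two])
  have h1 : deriv u = convolution p (deriv f) L volume := by
    funext x
    rw [hup]
    exact (hfsupp.hasDerivAt_convolution_right L hpl (hf2.of_le (by norm_num)) x).deriv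
  have h2 : deriv (deriv u) = convolution p (deriv (deriv f)) L volume := by
    funext x
    rw [h1]
    exact (hfsupp.deriv.hasDerivAt_convolution_right L hpl hf' x).deriv
  refine ⟨hup ▸ hfsupp.contDiff_convolution_right L hpl hf, fun x => ?_⟩
  have e1 := (hfsupp.convolutionExists_right L hpl hf.continuous) x
  have e2 := (hfsupp.deriv.deriv.convolutionExists_right L hpl
    (hf'.continuous_deriv (by norm_num))) x
  rw [h2, hup, convolution_def, convolution_def, ← integral_sub e1 e2]
  have hgs : HasCompactSupport fun t => f (x - t) :=
    hfsupp.comp_homeomorph (Homeomorph.subLeft x)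
  have hgc : ContDiff ℝ 2 fun t => f (x - t) := hf2.comp (contDiff_const.sub contDiff_id)
  have key := integral_kernel_mul_sub _ hgc hgs
  have hd1 : deriv (fun t => f (x - t)) = fun t => -deriv f (x - t) := by
    funext t
    exact deriv_comp_const_sub f x t
  have hd2 : deriv (deriv fun t => f (x - t)) = fun t => deriv (deriv f) (x - t) := by
    rw [hd1]
    funext t
    rw [deriv.fun_neg, deriv_comp_const_sub, neg_neg]
  rw [hd2, sub_zero] at key
  rw [← key]
  refine integral_congr_ae (.of_forall fun t => ?_)
  simp only [L, ContinuousLinearMap.mul_apply', hp]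
  ring
end

section
/- For every smooth compactly supported function u : ℝ → ℝ, setting y = u − u'', one has the identity ∫_ℝ ((u² − u'²)·y' + 2u'·y²)·y dx = ∫_ℝ u'·y³ dx; that is, the convective nonlinearity tested against y = u − u_xx reduces to the single cubic term ∫ u_x y³. -/
/-!
The left integrand minus `u' y³` is `(u² - u'²) y y' + u' y³`. Since `(u² - u'²)' = 2 u' (u - u'')
= 2 u' y`, this is the exact derivative of the compactly supported function `(u² - u'²) y² / 2`,
so its integral over `ℝ` vanishes.
-/

open MeasureTheory

/-- For every smooth compactly supported `u : ℝ → ℝ`, setting `y = u - u''`, one has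
`∫ ((u² - u'²) y' + 2 u' y²) y = ∫ u' y³`: the convective nonlinearity tested against
`y` reduces to the single cubic term. -/
theorem stmt16 (u : ℝ → ℝ) (hu : ContDiff ℝ (⊤ : ℕ∞) u) (hsupp : HasCompactSupport u)
    (y : ℝ → ℝ) (hy : y = fun x => u x - deriv (deriv u) x) :
    (∫ x : ℝ, (((u x) ^ 2 - (deriv u x) ^ 2) * deriv y x
        + 2 * deriv u x * (y x) ^ 2) * y x) =
      ∫ x : ℝ, deriv u x * (y x) ^ 3 := by
  have hu1 : ContDiff ℝ (⊤ : ℕ∞) (deriv u) := (contDiff_infty_iff_deriv.mp hu).2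
  have hu2 : ContDiff ℝ (⊤ : ℕ∞) (deriv (deriv u)) := (contDiff_infty_iff_deriv.mp hu1).2
  have hys : ContDiff ℝ (⊤ : ℕ∞) y := hy ▸ hu.sub hu2
  have hy1 : ContDiff ℝ (⊤ : ℕ∞) (deriv y) := (contDiff_infty_iff_deriv.mp hys).2
  have hyc : HasCompactSupport y := hy ▸ hsupp.sub hsupp.deriv.deriv
  have hyx : ∀ x, y x = u x - deriv (deriv u) x := fun x => by rw [hy]
  have cu := hu.continuous
  have cu1 := hu1.continuous
  have cy := hys.continuous
  have cy1 := hy1.continuous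
  -- Every integrand below is a continuous multiple of `y`.
  have key : ∀ g : ℝ → ℝ, Continuous g → Integrable (fun x => g x * y x) := fun g hg =>
    (hg.mul cy).integrable_of_hasCompactSupport hyc.mul_left
  have hcubic : Integrable (fun x => deriv u x * (y x) ^ 3) :=
    (key (fun x => deriv u x * (y x) ^ 2) (by fun_prop)).congr
      (.of_forall fun x => by ring)
  have hleft := key (fun x => ((u x) ^ 2 - (deriv u x) ^ 2) * deriv y x
    + 2 * deriv u x * (y x) ^ 2) (by fun_prop)
  have hprim : Integrable (fun x => ((u x) ^ 2 - (deriv u x) ^ 2) * (y x) ^ 2 / 2) :=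
    (key (fun x => ((u x) ^ 2 - (deriv u x) ^ 2) * y x / 2) (by fun_prop)).congr
      (.of_forall fun x => by ring)
  have hderiv : ∀ x, HasDerivAt (fun x => ((u x) ^ 2 - (deriv u x) ^ 2) * (y x) ^ 2 / 2)
      ((((u x) ^ 2 - (deriv u x) ^ 2) * deriv y x + 2 * deriv u x * (y x) ^ 2) * y x
        - deriv u x * (y x) ^ 3) x := fun x => by
    have d0 := (hu.differentiable (by simp) x).hasDerivAt
    have d1 := (hu1.differentiable (by simp) x).hasDerivAt
    have dy := (hys.differentiable (by simp) x).hasDerivAt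
    refine ((((d0.fun_pow 2).fun_sub (d1.fun_pow 2)).fun_mul (dy.fun_pow 2)).div_const 2).congr_deriv ?_
    have h2 : deriv (deriv u) x = u x - y x := by rw [hyx]; ring
    rw [h2]
    push_cast
    ring
  have h0 := integral_eq_zero_of_hasDerivAt_of_integrable hderiv (hleft.sub hcubic) hprim
  rw [integral_sub hleft hcubic] at h0
  exact sub_eq_zero.mp h0
end
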